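/- Let n ≥ 2, α ∈ (0, 1/n), and let X = (X_1,…,X_n) be a vector of integrable random variables following an α-concentration-exclusion (α-CE) model, and write S = X_1 + ⋯ + X_n. If ES_β(S) > ES_{nα}(S) for all β ∈ (0, nα), then DQ^ES_{nα}(X) = 1. -/

import Mathlib

open MeasureTheory ProbabilityTheory Filter Set

namespace DQ

variable {Ω : Type*} [MeasurableSpace Ω]

/-- An atomless probability measure: every non-null measurable set has a measurable
subset of strictly smaller positive measure. -/
def Atomless (P : Measure Ω) : Prop :=
  ∀ A : Set Ω, MeasurableSet A → 0 < P A →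
    ∃ B, MeasurableSet B ∧ B ⊆ A ∧ 0 < P B ∧ P B < P A

/-- Value-at-Risk at level `α` (small-`α` convention):
`VaR_α(X) = inf {x | P(X ≤ x) ≥ 1 - α}`. -/
noncomputable def VaR (P : Measure Ω) (α : ℝ) (X : Ω → ℝ) : ℝ :=
  sInf {x : ℝ | 1 - α ≤ (P {ω | X ω ≤ x}).toReal}

/-- Expected Shortfall at level `α`: `ES_α(X) = (1/α) ∫_0^α VaR_β(X) dβ`. -/
noncomputable def ES (P : Measure Ω) (α : ℝ) (X : Ω → ℝ) : ℝ :=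
  (1 / α) * ∫ β in Set.Ioo (0 : ℝ) α, VaR P β X

/-- `α* = inf {β ∈ (0,1) | VaR_β(∑ Xᵢ) ≤ ∑ VaR_α(Xᵢ)}`, with `inf ∅ = 1`. -/
noncomputable def alphaStarVaR (P : Measure Ω) (α : ℝ) {n : ℕ} (X : Fin n → Ω → ℝ) : ℝ :=
  sInf ({β ∈ Set.Ioo (0 : ℝ) 1 |
    VaR P β (fun ω => ∑ i, X i ω) ≤ ∑ i, VaR P α (X i)} ∪ {1})

/-- Diversification quotient based on VaR: `DQ^VaR_α(X) = α*/α`. -/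
noncomputable def DQVaR (P : Measure Ω) (α : ℝ) {n : ℕ} (X : Fin n → Ω → ℝ) : ℝ :=
  alphaStarVaR P α X / α

/-- `α* = inf {β ∈ (0,1) | ES_β(∑ Xᵢ) ≤ ∑ ES_α(Xᵢ)}`, with `inf ∅ = 1`. -/
noncomputable def alphaStarES (P : Measure Ω) (α : ℝ) {n : ℕ} (X : Fin n → Ω → ℝ) : ℝ :=
  sInf ({β ∈ Set.Ioo (0 : ℝ) 1 |
    ES P β (fun ω => ∑ i, X i ω) ≤ ∑ i, ES P α (X i)} ∪ {1})

/-- Diversification quotient based on ES: `DQ^ES_α(X) = α*/α`. -/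
noncomputable def DQES (P : Measure Ω) (α : ℝ) {n : ℕ} (X : Fin n → Ω → ℝ) : ℝ :=
  alphaStarES P α X / α

end DQ

namespace DQ

variable {Ω : Type*} [MeasurableSpace Ω]

/-- `A` is a tail event of `X`: `0 < P(A) < 1` and, off a null set,
`X(ω) ≥ X(ω')` for all `ω ∈ A` and `ω' ∈ Aᶜ`. -/
def TailEvent (P : Measure Ω) (X : Ω → ℝ) (A : Set Ω) : Prop :=
  MeasurableSet A ∧ 0 < P A ∧ P A < 1 ∧
  ∃ N : Set Ω, P N = 0 ∧ ∀ ω ∈ A \ N, ∀ ω' ∈ Aᶜ \ N, X ω' ≤ X ω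

/-- `(X₁,…,Xₙ)` is `α`-concentrated: the components share a common tail event of
probability `α`. -/
def Concentrated (P : Measure Ω) {n : ℕ} (X : Fin n → Ω → ℝ) (α : ℝ) : Prop :=
  ∃ A : Set Ω, P A = ENNReal.ofReal α ∧ ∀ i, TailEvent P (X i) A

end DQ

namespace DQ

variable {Ω : Type*} [MeasurableSpace Ω]

/-- The `α`-concentration-exclusion (`α`-CE) model, for `α ∈ (0, 1/n)`. -/
def CEModel (P : Measure Ω) {n : ℕ} (X : Fin n → Ω → ℝ) (α : ℝ) : Prop :=
  (∀ i, (P {ω | VaR P α (X i) < X i ω}).toReal = α) ∧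
  (∀ i, (n : ℝ) * α ≤ (P {ω | VaR P α (X i) ≤ X i ω}).toReal) ∧
  (∀ i j, i ≠ j →
    P ({ω | VaR P α (X i) < X i ω} ∩ {ω | VaR P α (X j) < X j ω}) = 0) ∧
  Concentrated P X ((n : ℝ) * α)

end DQ

namespace DQ

lemma VaR_le_iff {Ω : Type*} [MeasurableSpace Ω] (P : Measure Ω) [IsProbabilityMeasure P]
    (X : Ω → ℝ) (hX : Measurable X) (β : ℝ) (hβ : β ∈ Set.Ioo (0 : ℝ) 1) (x : ℝ) :
    VaR P β X ≤ x ↔ 1 - β ≤ P.real {ω | X ω ≤ x} := by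
  have : IsProbabilityMeasure (P.map X) := Measure.isProbabilityMeasure_map hX.aemeasurable
  have hF : ∀ y, (P {ω | X ω ≤ y}).toReal = cdf (P.map X) y := by
    intro y
    rw [cdf_eq_real, measureReal_def, Measure.map_apply hX measurableSet_Iic]
    rfl
  have hV : VaR P β X = sInf {x : ℝ | 1 - β ≤ cdf (P.map X) x} := by
    simp only [VaR, hF]
  rw [hV, measureReal_def, hF]
  set F := cdf (P.map X) with hFd
  have hbdd : BddBelow {x : ℝ | 1 - β ≤ F x} := by
    have h0 := (tendsto_cdf_atBot (P.map X)).eventually (gt_mem_nhds (show (0:ℝ) < 1 - β by linarith [hβ.2]))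
    obtain ⟨b, hb⟩ := h0.exists
    refine ⟨b, fun y hy => ?_⟩
    by_contra hc
    have := F.mono (not_le.1 hc).le
    simp only [Set.mem_setOf_eq] at hy
    linarith
  have hne : {x : ℝ | 1 - β ≤ F x}.Nonempty := by
    have h0 := (tendsto_cdf_atTop (P.map X)).eventually (lt_mem_nhds (show 1 - β < (1:ℝ) by linarith [hβ.1]))
    obtain ⟨b, hb⟩ := h0.exists
    exact ⟨b, hb.le⟩
  constructor
  · intro h
    have hgt : ∀ y, x < y → 1 - β ≤ F y := by
      intro y hy
      obtain ⟨z, hz, hzy⟩ := exists_lt_of_csInf_lt hne (lt_of_le_of_lt h hy)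
      exact le_trans hz (F.mono hzy.le)
    have hr : Tendsto F (nhdsWithin x (Set.Ioi x)) (nhds (F x)) :=
      ((F.right_continuous x).mono Set.Ioi_subset_Ici_self).tendsto
    exact ge_of_tendsto hr (eventually_mem_nhdsWithin.mono fun y hy => hgt y hy)
  · intro h
    exact csInf_le hbdd h

lemma integral_VaR_eq {Ω : Type*} [MeasurableSpace Ω] (P : Measure Ω) [IsProbabilityMeasure P]
    (X : Ω → ℝ) (hX : Measurable X) (p : ℝ) (hp : p ∈ Set.Ioo (0 : ℝ) 1) (A : Set Ω)
    (hA : P A = ENNReal.ofReal p) (hT : TailEvent P X A) :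
    ∫ β in Set.Ioo (0 : ℝ) p, VaR P β X = ∫ ω in A, X ω ∂P := by
  obtain ⟨hAm, hA0, hA1, N, hN, hT⟩ := hT
  have hanti : AntitoneOn (fun β => VaR P β X) (Set.Ioo 0 p) := by
    intro a ha b hb hab
    have h1 := (VaR_le_iff P X hX a ⟨ha.1, ha.2.trans hp.2⟩ _).1 le_rfl
    exact (VaR_le_iff P X hX b ⟨hb.1, hb.2.trans hp.2⟩ _).2 (by linarith)
  have hmeas : AEMeasurable (fun β => VaR P β X) (volume.restrict (Set.Ioo 0 p)) :=
    aemeasurable_restrict_of_antitoneOn measurableSet_Ioo hanti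
  have hAr : P.real A = p := by rw [measureReal_def, hA, ENNReal.toReal_ofReal hp.1.le]
  have hAcr : P.real Aᶜ = 1 - p := by rw [probReal_compl_eq_one_sub hAm, hAr]
  -- threshold
  have hne1 : (A \ N).Nonempty := by
    apply nonempty_of_measure_ne_zero (μ := P)
    rw [measure_sdiff_null hN]; exact hA0.ne'
  have hne2 : (Aᶜ \ N).Nonempty := by
    apply nonempty_of_measure_ne_zero (μ := P)
    rw [measure_sdiff_null hN]
    intro h
    rw [measureReal_def, h] at hAcr
    simp at hAcr
    linarith [hp.2]
  obtain ⟨c, hc1, hc2⟩ : ∃ c, (∀ ω ∈ A \ N, c ≤ X ω) ∧ (∀ ω ∈ Aᶜ \ N, X ω ≤ c) := by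
    obtain ⟨w, hw⟩ := hne2
    refine ⟨sInf (X '' (A \ N)), fun ω hω => csInf_le ⟨X w, ?_⟩ ⟨ω, hω, rfl⟩, fun ω hω =>
      le_csInf (hne1.image _) ?_⟩
    · rintro _ ⟨v, hv, rfl⟩; exact hT v hv w hw
    · rintro _ ⟨v, hv, rfl⟩; exact hT v hv ω hω
  have hNae : ∀ᵐ ω ∂P, ω ∉ N := measure_eq_zero_iff_ae_notMem.1 hN
  have key : ∀ x, P.real ({ω | X ω ≤ x} ∩ A) = max (p - (1 - P.real {ω | X ω ≤ x})) 0 := by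
    intro x
    have hsx : MeasurableSet {ω | X ω ≤ x} := measurableSet_le hX measurable_const
    have hsplit := measureReal_inter_add_sdiff (μ := P) (s := {ω | X ω ≤ x}) hAm
    rcases lt_or_ge x c with h | h
    · have h0 : P.real ({ω | X ω ≤ x} ∩ A) = 0 := by
        rw [measureReal_def, measure_eq_zero_iff_ae_notMem.2, ENNReal.toReal_zero]
        filter_upwards [hNae] with ω hω hm
        have := hc1 ω ⟨hm.2, hω⟩
        have := hm.1
        simp only [Set.mem_setOf_eq] at this
        linarith
      have h1 : P.real ({ω | X ω ≤ x} \ A) ≤ P.real Aᶜ :=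
        measureReal_mono (fun ω hω => hω.2)
      rw [h0, max_eq_right]
      linarith
    · have h1 : P.real ({ω | X ω ≤ x} \ A) = P.real Aᶜ := by
        apply measureReal_congr
        rw [eventuallyEq_set]
        filter_upwards [hNae] with ω hω
        constructor
        · exact fun h => h.2
        · exact fun h' => ⟨(hc2 ω ⟨h', hω⟩).trans h, h'⟩
      have h2 : P.real ({ω | X ω ≤ x} ∩ A) = p - (1 - P.real {ω | X ω ≤ x}) := by linarith
      rw [h2, max_eq_left]
      rw [← h2]; exact measureReal_nonneg
  have hmap : (volume.restrict (Set.Ioo 0 p)).map (fun β => VaR P β X) = (P.restrict A).map X := by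
    apply Measure.ext_of_Iic
    intro x
    rw [Measure.map_apply_of_aemeasurable hmeas measurableSet_Iic,
      Measure.map_apply hX measurableSet_Iic, Measure.restrict_apply' measurableSet_Ioo,
      Measure.restrict_apply' hAm]
    have hF1 : P.real {ω | X ω ≤ x} ≤ 1 := measureReal_le_one
    have e1 : (fun β => VaR P β X) ⁻¹' Set.Iic x ∩ Set.Ioo 0 p
        = Set.Ici (1 - P.real {ω | X ω ≤ x}) ∩ Set.Ioo 0 p := by
      ext β
      constructor
      · rintro ⟨h, h'⟩
        have := (VaR_le_iff P X hX β ⟨h'.1, h'.2.trans hp.2⟩ x).1 h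
        exact ⟨by simp only [Set.mem_Ici]; linarith, h'⟩
      · rintro ⟨h, h'⟩
        simp only [Set.mem_Ici] at h
        exact ⟨(VaR_le_iff P X hX β ⟨h'.1, h'.2.trans hp.2⟩ x).2 (by linarith), h'⟩
    have e2 : volume (Set.Ici (1 - P.real {ω | X ω ≤ x}) ∩ Set.Ioo 0 p)
        = ENNReal.ofReal (p - (1 - P.real {ω | X ω ≤ x})) := by
      apply le_antisymm
      · rw [← Real.volume_Ico]
        exact measure_mono fun y hy => ⟨hy.1, hy.2.2⟩
      · rw [← Real.volume_Ioo]
        exact measure_mono fun y hy => ⟨hy.1.le, by linarith [hy.1], hy.2⟩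
    have e3 : P ({ω | X ω ≤ x} ∩ A) = ENNReal.ofReal (p - (1 - P.real {ω | X ω ≤ x})) := by
      rw [← ofReal_measureReal, key, ENNReal.ofReal_max]; simp
    rw [e1, e2, ← e3]
    rfl
  have i1 := integral_map hmeas (f := fun y : ℝ => y) aestronglyMeasurable_id
  have i2 := integral_map (μ := P.restrict A) hX.aemeasurable (f := fun y : ℝ => y) aestronglyMeasurable_id
  rw [← i1, ← i2, hmap]

end DQ

open DQ in
/-- If n ≥ 2, α ∈ (0, 1/n), X is an integrable α-CE model and ES_β(S) > ES_{nα}(S)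
for all β ∈ (0, nα), where S = X₁ + ⋯ + Xₙ, then DQ^ES_{nα}(X) = 1. -/
theorem stmt9 {Ω : Type*} [MeasurableSpace Ω] (P : Measure Ω) [IsProbabilityMeasure P]
    (hP : Atomless P) (n : ℕ) (hn : 2 ≤ n) (X : Fin n → Ω → ℝ)
    (hX : ∀ i, Measurable (X i)) (hint : ∀ i, Integrable (X i) P)
    (α : ℝ) (hα : α ∈ Set.Ioo (0 : ℝ) (1 / n)) (hCE : CEModel P X α)
    (hnf : ∀ β ∈ Set.Ioo (0 : ℝ) ((n : ℝ) * α),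
      ES P ((n : ℝ) * α) (fun ω => ∑ i, X i ω) < ES P β (fun ω => ∑ i, X i ω)) :
    DQES P ((n : ℝ) * α) X = 1 := by
  have hn0 : (0 : ℝ) < n := by exact_mod_cast (by omega : 0 < n)
  have hp : (n : ℝ) * α ∈ Set.Ioo (0 : ℝ) 1 := by
    refine ⟨mul_pos hn0 hα.1, ?_⟩
    have := mul_lt_mul_of_pos_left hα.2 hn0
    rwa [mul_one_div_cancel hn0.ne'] at this
  obtain ⟨-, -, -, A, hA, hT⟩ := hCE
  have hS : TailEvent P (fun ω => ∑ i, X i ω) A := by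
    have i0 : Fin n := ⟨0, by omega⟩
    refine ⟨(hT i0).1, (hT i0).2.1, (hT i0).2.2.1, ?_⟩
    choose N hN hNT using fun i => (hT i).2.2.2
    refine ⟨⋃ i, N i, measure_iUnion_null hN, fun ω hω ω' hω' => Finset.sum_le_sum fun i _ => ?_⟩
    exact hNT i ω ⟨hω.1, fun h => hω.2 (Set.mem_iUnion_of_mem i h)⟩ ω'
      ⟨hω'.1, fun h => hω'.2 (Set.mem_iUnion_of_mem i h)⟩
  have hES : ES P ((n : ℝ) * α) (fun ω => ∑ i, X i ω) = ∑ i, ES P ((n : ℝ) * α) (X i) := by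
    unfold ES
    rw [integral_VaR_eq P _ (Finset.measurable_sum _ fun i _ => hX i) _ hp A hA hS,
      integral_finsetSum _ (fun i _ => (hint i).integrableOn), Finset.mul_sum]
    exact Finset.sum_congr rfl fun i _ => by
      rw [integral_VaR_eq P _ (hX i) _ hp A hA (hT i)]
  have hstar : alphaStarES P ((n : ℝ) * α) X = (n : ℝ) * α := by
    unfold alphaStarES
    apply IsLeast.csInf_eq
    refine ⟨Or.inl ⟨hp, hES.le⟩, ?_⟩
    rintro β (⟨hβ, hle⟩ | hβ)
    · by_contra hc
      have := hnf β ⟨hβ.1, not_le.1 hc⟩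
      linarith
    · rw [Set.mem_singleton_iff.1 hβ]; exact hp.2.le
  unfold DQES
  rw [hstar, div_self hp.1.ne']
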